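/- Let α ∈ (0,2), n ∈ ℕ (n ≥ 0), and x ∈ ℝ. Then the function y ↦ (μ_n'(x−y) − μ_n'(x+y))·y^(−α) is absolutely integrable on (0,∞), and (c_α/α)·∫₀^∞ (μ_n'(x−y) − μ_n'(x+y))·y^(−α) dy = (Γ(1+α)/(ix+1)^(1+α)) · ∑_{k=0}^{n} C(n,k)·C(−1−α,k)·(2/(ix+1))^k. (The right-hand side is the terminating hypergeometric expression (Γ(1+α)/(ix+1)^(1+α))·₂F₁(−n, 1+α; 1; 2/(ix+1)); in particular it equals Γ(1+α)/(ix+1)^(1+α) when n = 0.) -/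

import Mathlib

open MeasureTheory Finset

/-- The constant `c_α = α·2^(α−1)·Γ(1/2+α/2)/(√π·Γ(1−α/2))`. -/
noncomputable def cFrac (α : ℝ) : ℝ :=
  α * 2 ^ (α - 1) * Real.Gamma (1 / 2 + α / 2) / (Real.sqrt Real.pi * Real.Gamma (1 - α / 2))

/-- The complex Higgins function `λ_n(x) = ((ix−1)/(ix+1))^n`. -/
noncomputable def higgins (n : ℤ) (x : ℝ) : ℂ :=
  ((Complex.I * (x : ℂ) - 1) / (Complex.I * (x : ℂ) + 1)) ^ n

/-- The derivative `λ_n'`. -/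
noncomputable def higgins' (n : ℤ) (x : ℝ) : ℂ := deriv (higgins n) x

/-- The complex Christov function `μ_n(x) = (ix−1)^n/(ix+1)^(n+1)`. -/
noncomputable def christov (n : ℤ) (x : ℝ) : ℂ :=
  (Complex.I * (x : ℂ) - 1) ^ n / (Complex.I * (x : ℂ) + 1) ^ (n + 1)

/-- The derivative `μ_n'`. -/
noncomputable def christov' (n : ℤ) (x : ℝ) : ℂ := deriv (christov n) x

/-- Generalized binomial coefficient `C(z,k) = z(z−1)⋯(z−k+1)/k!` over `ℂ`. -/
noncomputable def gbinom (z : ℂ) (k : ℕ) : ℂ :=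
  (∏ i ∈ Finset.range k, (z - (i : ℂ))) / (k.factorial : ℂ)

/-- Generalized binomial coefficient `C(z,k) = z(z−1)⋯(z−k+1)/k!` over `ℝ`. -/
noncomputable def gbinomR (z : ℝ) (k : ℕ) : ℝ :=
  (∏ i ∈ Finset.range k, (z - (i : ℝ))) / (k.factorial : ℝ)

/-- Rising factorial (Pochhammer symbol) `(z)_k = z(z+1)⋯(z+k−1)` over `ℂ`. -/
noncomputable def poch (z : ℂ) (k : ℕ) : ℂ := ∏ i ∈ Finset.range k, (z + (i : ℂ))

/-- `G_α(l) = (1/(l+1))·∑_{k=0}^{l} C(l+1,k+1)·C(−1−α,k)·2^k = ₂F₁(−l, 1+α; 2; 2)`, over `ℂ`. -/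
noncomputable def Gc (α : ℝ) (l : ℕ) : ℂ :=
  (1 / ((l : ℂ) + 1)) * ∑ k ∈ Finset.range (l + 1),
    gbinom ((l : ℂ) + 1) (k + 1) * gbinom (-1 - (α : ℂ)) k * 2 ^ k

/-- `G_α(l) = (1/(l+1))·∑_{k=0}^{l} C(l+1,k+1)·C(−1−α,k)·2^k = ₂F₁(−l, 1+α; 2; 2)`, over `ℝ`. -/
noncomputable def GR (α : ℝ) (l : ℕ) : ℝ :=
  (1 / ((l : ℝ) + 1)) * ∑ k ∈ Finset.range (l + 1),
    gbinomR ((l : ℝ) + 1) (k + 1) * gbinomR (-1 - α) k * 2 ^ k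

/-- `H_α(l) = ∑_{k=0}^{l} C(l,k)·C(−1−α,k)·2^k = ₂F₁(−l, 1+α; 1; 2)`, over `ℂ`. -/
noncomputable def Hc (α : ℝ) (l : ℕ) : ℂ :=
  ∑ k ∈ Finset.range (l + 1), gbinom (l : ℂ) k * gbinom (-1 - (α : ℂ)) k * 2 ^ k

/-- `H_α(l) = ∑_{k=0}^{l} C(l,k)·C(−1−α,k)·2^k = ₂F₁(−l, 1+α; 1; 2)`, over `ℝ`. -/
noncomputable def HR (α : ℝ) (l : ℕ) : ℝ :=
  ∑ k ∈ Finset.range (l + 1), gbinomR (l : ℝ) k * gbinomR (-1 - α) k * 2 ^ k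

/-- `arccot(x) = π/2 − arctan(x) ∈ (0,π)`. -/
noncomputable def arccot (x : ℝ) : ℝ := Real.pi / 2 - Real.arctan x

noncomputable def hK (α : ℝ) (m : ℕ) (w : ℂ) (y : ℝ) : ℂ :=
  (((w - Complex.I * (y : ℂ))⁻¹) ^ (m + 1) - ((w + Complex.I * (y : ℂ))⁻¹) ^ (m + 1)) *
    ((y ^ (-α) : ℝ) : ℂ)

lemma pow_sub_pow_bound (A B : ℂ) (M : ℝ) (hA : ‖A‖ ≤ M) (hB : ‖B‖ ≤ M) (m : ℕ) :
    ‖A ^ (m + 1) - B ^ (m + 1)‖ ≤ (m + 1) * M ^ m * ‖A - B‖ := by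
  have hM : 0 ≤ M := (norm_nonneg A).trans hA
  induction m with
  | zero => simp
  | succ k ih =>
    have e : A ^ (k + 1 + 1) - B ^ (k + 1 + 1) =
      A ^ (k + 1) * (A - B) + (A ^ (k + 1) - B ^ (k + 1)) * B := by ring
    rw [e]
    calc _ ≤ ‖A‖ ^ (k + 1) * ‖A - B‖ + ‖A ^ (k + 1) - B ^ (k + 1)‖ * ‖B‖ := by
            refine (norm_add_le _ _).trans ?_
            rw [norm_mul, norm_mul, norm_pow]
      _ ≤ M ^ (k + 1) * ‖A - B‖ + ((k + 1) * M ^ k * ‖A - B‖) * M := by gcongr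
      _ = _ := by push_cast; ring

lemma hK_norm_le (α : ℝ) (m : ℕ) (w : ℂ) (δ R y : ℝ) (hδ : 0 < δ) (h1 : δ ≤ w.re)
    (h2 : |w.im| ≤ R) (hy : 0 < y) :
    ‖hK α m w y‖ ≤ ((m + 1) * (1 / δ) ^ m * (2 * ((1 + R) / δ + 1) ^ 2)) *
      (y ^ (1 - α) / (1 + y) ^ 2) := by
  have hR : 0 ≤ R := (abs_nonneg _).trans h2
  obtain ⟨h3, h4⟩ := abs_le.mp h2
  set a := w - Complex.I * (y : ℂ) with ha
  set b := w + Complex.I * (y : ℂ) with hb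
  have are : a.re = w.re := by simp [ha]
  have bre : b.re = w.re := by simp [hb]
  have aim : a.im = w.im - y := by simp [ha]
  have bim : b.im = w.im + y := by simp [hb]
  have a1 : δ ≤ ‖a‖ := h1.trans (are ▸ (Complex.re_le_norm a))
  have b1 : δ ≤ ‖b‖ := h1.trans (bre ▸ (Complex.re_le_norm b))
  have a2 : y - R ≤ ‖a‖ := by
    have := (abs_le.mp (Complex.abs_im_le_norm a)).1; rw [aim] at this; linarith
  have b2 : y - R ≤ ‖b‖ := by
    have := (abs_le.mp (Complex.abs_im_le_norm b)).2; rw [bim] at this; linarith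
  have key : ∀ t : ℝ, δ ≤ t → y - R ≤ t → t⁻¹ ≤ ((1 + R) / δ + 1) / (1 + y) := by
    intro t t1 t2
    have ht : 0 < t := by linarith
    rw [inv_eq_one_div, div_le_div_iff₀ ht (by positivity)]
    have : (1 + R) / δ * t ≥ 1 + R := by
      rw [ge_iff_le, div_mul_eq_mul_div, le_div_iff₀ hδ]; gcongr
    linarith
  have a0 : a ≠ 0 := norm_pos_iff.mp (by linarith)
  have b0 : b ≠ 0 := norm_pos_iff.mp (by linarith)
  have hab : ‖a⁻¹ - b⁻¹‖ ≤ 2 * y * (((1 + R) / δ + 1) / (1 + y)) ^ 2 := by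
    have e : a⁻¹ - b⁻¹ = (2 * y * Complex.I) * a⁻¹ * b⁻¹ := by
      have : b - a = 2 * y * Complex.I := by rw [ha, hb]; ring
      rw [← this]; field_simp
    rw [e, norm_mul, norm_mul, norm_inv, norm_inv]
    have : ‖(2 * y * Complex.I : ℂ)‖ = 2 * y := by simp [abs_of_pos hy]
    rw [this, sq, mul_assoc]
    have := key _ a1 a2
    have := key _ b1 b2
    gcongr
  have hA : ‖a⁻¹‖ ≤ 1 / δ := by
    rw [norm_inv, inv_eq_one_div]; gcongr
  have hB : ‖b⁻¹‖ ≤ 1 / δ := by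
    rw [norm_inv, inv_eq_one_div]; gcongr
  have hp := pow_sub_pow_bound _ _ _ hA hB m
  have hyα : (0 : ℝ) ≤ y ^ (-α) := by positivity
  rw [hK, norm_mul, Complex.norm_real, Real.norm_of_nonneg hyα]
  calc _ ≤ ((m + 1) * (1 / δ) ^ m * (2 * y * (((1 + R) / δ + 1) / (1 + y)) ^ 2)) * y ^ (-α) := by
        gcongr
        exact hp.trans (by gcongr)
    _ = _ := by
      rw [sub_eq_add_neg, Real.rpow_add hy, Real.rpow_one]; field_simp

lemma bound_integrable (α : ℝ) (hα : α ∈ Set.Ioo (0 : ℝ) 2) :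
    IntegrableOn (fun y : ℝ => y ^ (1 - α) / (1 + y) ^ 2) (Set.Ioi 0) := by
  obtain ⟨h0, h2⟩ := hα
  have hm : ∀ s, AEStronglyMeasurable (fun y : ℝ => y ^ (1 - α) / (1 + y) ^ 2)
      (volume.restrict s) := fun s => (by fun_prop : Measurable _).aestronglyMeasurable
  rw [← Set.Ioc_union_Ioi_eq_Ioi (zero_le_one (α := ℝ))]
  refine IntegrableOn.union ?_ ?_
  · have := (intervalIntegral.intervalIntegrable_rpow' (a := 0) (b := 1) (r := 1 - α)
      (by linarith)).1
    refine Integrable.mono' this (hm _) ?_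
    filter_upwards [ae_restrict_mem measurableSet_Ioc] with y hy
    have : 0 < y := hy.1
    rw [Real.norm_of_nonneg (by positivity)]
    apply div_le_self (by positivity)
    nlinarith
  · have := integrableOn_Ioi_rpow_of_lt (a := -1 - α) (by linarith) one_pos
    refine Integrable.mono' this (hm _) ?_
    filter_upwards [ae_restrict_mem measurableSet_Ioi] with y hy
    have hy1 : 1 < y := hy
    have hy0 : 0 < y := by linarith
    rw [Real.norm_of_nonneg (by positivity), div_le_iff₀ (by positivity)]
    have : y ^ (1 - α) = y ^ (-1 - α) * y ^ 2 := by
      rw [← Real.rpow_natCast y 2, ← Real.rpow_add hy0]; congr 1; push_cast; ring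
    rw [this]; gcongr; linarith

lemma hK_meas (α : ℝ) (m : ℕ) (w : ℂ) : Measurable (hK α m w) := by
  unfold hK; fun_prop

lemma hK_integrable (α : ℝ) (hα : α ∈ Set.Ioo (0 : ℝ) 2) (m : ℕ) (w : ℂ) (hw : 0 < w.re) :
    IntegrableOn (hK α m w) (Set.Ioi 0) := by
  refine Integrable.mono' ((bound_integrable α hα).const_mul
      ((m + 1) * (1 / w.re) ^ m * (2 * ((1 + |w.im|) / w.re + 1) ^ 2)))
    (hK_meas α m w).aestronglyMeasurable ?_
  filter_upwards [ae_restrict_mem measurableSet_Ioi] with y hy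
  exact hK_norm_le α m w _ _ y hw le_rfl le_rfl hy

lemma hK_hasDerivAt_pt (α : ℝ) (m : ℕ) (w : ℂ) (hw : 0 < w.re) (y : ℝ) :
    HasDerivAt (fun w => hK α m w y) (-(m + 1) * hK α (m + 1) w y) w := by
  unfold hK
  have a0 : w - Complex.I * (y : ℂ) ≠ 0 := by
    intro h; have := congrArg Complex.re h; simp at this; linarith
  have b0 : w + Complex.I * (y : ℂ) ≠ 0 := by
    intro h; have := congrArg Complex.re h; simp at this; linarith
  have h1 := ((((hasDerivAt_id w).sub_const (Complex.I * (y : ℂ))).inv a0).pow (m + 1))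
  have h2 := ((((hasDerivAt_id w).add_const (Complex.I * (y : ℂ))).inv b0).pow (m + 1))
  refine ((h1.sub h2).mul_const ((y ^ (-α) : ℝ) : ℂ)).congr_deriv ?_
  simp only [id, Nat.add_sub_cancel, Pi.inv_apply]
  rw [neg_div, neg_div, one_div, one_div, ← inv_pow, ← inv_pow]
  generalize (w - Complex.I * (y : ℂ))⁻¹ = A
  generalize (w + Complex.I * (y : ℂ))⁻¹ = B
  push_cast
  ring

noncomputable def FK (α : ℝ) (m : ℕ) (w : ℂ) : ℂ := ∫ y in Set.Ioi (0 : ℝ), hK α m w y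

lemma FK_hasDerivAt (α : ℝ) (hα : α ∈ Set.Ioo (0 : ℝ) 2) (m : ℕ) (w : ℂ) (hw : 0 < w.re) :
    HasDerivAt (FK α m) (-(m + 1) * FK α (m + 1) w) w := by
  set s : Set ℂ := {z | w.re / 2 < z.re} ∩ {z | |z.im| < |w.im| + 1} with hs
  have hso : IsOpen s := by
    apply IsOpen.inter
    · exact isOpen_lt continuous_const Complex.continuous_re
    · exact isOpen_lt (Complex.continuous_im.abs) continuous_const
  have hws : w ∈ s := ⟨by simp only [Set.mem_ofPred_eq]; linarith,
    by simp only [Set.mem_ofPred_eq]; linarith⟩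
  have := (hasDerivAt_integral_of_dominated_loc_of_deriv_le (μ := volume.restrict (Set.Ioi (0 : ℝ)))
    (F := fun w y => hK α m w y) (F' := fun w y => -(m + 1) * hK α (m + 1) w y)
    (bound := fun y => ‖(-(m + 1) : ℂ)‖ * ((((m + 1 : ℕ) + 1) * (1 / (w.re / 2)) ^ (m + 1) * (2 * ((1 + (|w.im| + 1)) / (w.re / 2) + 1) ^ 2)) *
      (y ^ (1 - α) / (1 + y) ^ 2)))
    (hso.mem_nhds hws)
    (Filter.Eventually.of_forall fun w => (hK_meas α m w).aestronglyMeasurable)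
    (hK_integrable α hα m w hw)
    (((hK_meas α (m + 1) w).const_mul _).aestronglyMeasurable) ?_ ?_ ?_).2
  · rw [integral_const_mul] at this
    exact this
  · filter_upwards [ae_restrict_mem measurableSet_Ioi] with y hy z hz
    rw [norm_mul]
    gcongr
    exact hK_norm_le α (m + 1) z _ _ y (by linarith) (le_of_lt hz.1) (le_of_lt hz.2) hy
  · exact ((bound_integrable α hα).const_mul _).const_mul _
  · filter_upwards with y z hz
    exact hK_hasDerivAt_pt α m z (by have := hz.1; simp only [Set.mem_ofPred_eq] at this; linarith) y

lemma beta_real (a b : ℝ) (ha : 0 < a) (hb : 0 < b) :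
    ∫ u in Set.Ioo (0 : ℝ) 1, u ^ (a - 1) * (1 - u) ^ (b - 1) =
      Real.Gamma a * Real.Gamma b / Real.Gamma (a + b) := by
  have h := Complex.betaIntegral_eq_Gamma_mul_div (a : ℂ) (b : ℂ) (by simpa) (by simpa)
  rw [← Complex.ofReal_add, Complex.Gamma_ofReal, Complex.Gamma_ofReal, Complex.Gamma_ofReal,
    Complex.betaIntegral, intervalIntegral.integral_of_le zero_le_one,
    integral_Ioc_eq_integral_Ioo] at h
  have e : ∫ x in Set.Ioo (0 : ℝ) 1, (x : ℂ) ^ ((a : ℂ) - 1) * (1 - (x : ℂ)) ^ ((b : ℂ) - 1) =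
      ∫ x in Set.Ioo (0 : ℝ) 1, ((x ^ (a - 1) * (1 - x) ^ (b - 1) : ℝ) : ℂ) := by
    refine setIntegral_congr_fun measurableSet_Ioo fun x hx => ?_
    have h1 : 0 ≤ x := hx.1.le
    have h2 : 0 ≤ 1 - x := by linarith [hx.2]
    rw [Complex.ofReal_mul, Complex.ofReal_cpow h1, Complex.ofReal_cpow h2]
    push_cast; rfl
  rw [e, integral_complex_ofReal] at h
  exact_mod_cast h

lemma beta_ioi (α : ℝ) (hα : α ∈ Set.Ioo (0 : ℝ) 2) :
    ∫ y in Set.Ioi (0 : ℝ), 2 * y / (1 + y ^ 2) * y ^ (-α) =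
      Real.Gamma (1 - α / 2) * Real.Gamma (α / 2) := by
  obtain ⟨h0, h2⟩ := hα
  have hb := beta_real (1 - α / 2) (α / 2) (by linarith) (by linarith)
  rw [sub_add_cancel, Real.Gamma_one, div_one] at hb
  rw [← hb]
  set f : ℝ → ℝ := fun y => y ^ 2 / (1 + y ^ 2) with hf
  have himg : f '' (Set.Ioi 0) = Set.Ioo 0 1 := by
    ext u
    constructor
    · rintro ⟨y, hy, rfl⟩
      have : 0 < y := hy
      refine ⟨by positivity, ?_⟩
      simp only [hf]
      rw [div_lt_one (by positivity)]; linarith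
    · rintro ⟨u0, u1⟩
      have : 0 < 1 - u := by linarith
      refine ⟨Real.sqrt (u / (1 - u)), Real.sqrt_pos.mpr (by positivity), ?_⟩
      simp only [hf]
      rw [Real.sq_sqrt (by positivity)]
      field_simp
      ring
  have hder : ∀ y ∈ Set.Ioi (0 : ℝ), HasDerivWithinAt f (2 * y / (1 + y ^ 2) ^ 2) (Set.Ioi 0) y := by
    intro y hy
    have hp : (1 + y ^ 2) ≠ 0 := by positivity
    have := ((hasDerivAt_pow 2 y).div ((hasDerivAt_pow 2 y).const_add 1) hp).hasDerivWithinAt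
      (s := Set.Ioi 0)
    refine this.congr_deriv ?_
    field_simp
    norm_num
    ring
  have hinj : Set.InjOn f (Set.Ioi 0) := by
    intro a ha b hb hab
    have ha' : 0 < a := ha
    have hb' : 0 < b := hb
    simp only [hf] at hab
    rw [div_eq_div_iff (by positivity) (by positivity)] at hab
    have : a ^ 2 = b ^ 2 := by linarith
    exact (pow_left_inj₀ ha'.le hb'.le two_ne_zero).mp this
  rw [← himg, integral_image_eq_integral_abs_deriv_smul measurableSet_Ioi hder hinj]
  refine setIntegral_congr_fun measurableSet_Ioi fun y hy => ?_
  have hy : 0 < y := hy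
  have hq : 0 < 1 + y ^ 2 := by positivity
  simp only [hf, smul_eq_mul]
  rw [abs_of_pos (by positivity)]
  have e1 : 1 - y ^ 2 / (1 + y ^ 2) = (1 + y ^ 2)⁻¹ := by field_simp; ring
  rw [e1, Real.div_rpow (by positivity) hq.le, Real.inv_rpow hq.le, ← Real.rpow_natCast y 2,
    ← Real.rpow_mul hy.le]
  have e2 : ((2 : ℕ) : ℝ) * (1 - α / 2 - 1) = -α := by push_cast; ring
  rw [e2]
  have e3 : (1 + y ^ ((2 : ℕ) : ℝ)) ^ (1 - α / 2 - 1) * (1 + y ^ ((2 : ℕ) : ℝ)) ^ (α / 2 - 1) =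
      (1 + y ^ ((2 : ℕ) : ℝ))⁻¹ := by
    rw [Real.rpow_natCast, ← Real.rpow_add hq, ← Real.rpow_neg_one]; congr 1; ring
  have e4 : y ^ (-α) / (1 + y ^ ((2 : ℕ) : ℝ)) ^ (1 - α / 2 - 1) *
      ((1 + y ^ ((2 : ℕ) : ℝ)) ^ (α / 2 - 1))⁻¹ = y ^ (-α) * (1 + y ^ ((2 : ℕ) : ℝ)) := by
    rw [div_eq_mul_inv, mul_assoc, ← mul_inv, e3, inv_inv]
  rw [e4, Real.rpow_natCast]
  field_simp

lemma const_eq (α : ℝ) (hα : α ∈ Set.Ioo (0 : ℝ) 2) :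
    α * 2 ^ (α - 1) * Real.Gamma (1 / 2 + α / 2) / (Real.sqrt Real.pi * Real.Gamma (1 - α / 2)) / α
      * (α * (Real.Gamma (1 - α / 2) * Real.Gamma (α / 2))) = Real.Gamma (1 + α) := by
  obtain ⟨h0, h2⟩ := hα
  have hG : Real.Gamma (1 - α / 2) ≠ 0 := (Real.Gamma_pos_of_pos (by linarith)).ne'
  have hpi : Real.sqrt Real.pi ≠ 0 := (Real.sqrt_pos.mpr Real.pi_pos).ne'
  have h := Real.Gamma_mul_Gamma_add_half (1 / 2 + α / 2)
  have h3 : Real.Gamma (1 / 2 + α / 2 + 1 / 2) = α / 2 * Real.Gamma (α / 2) := by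
    rw [← Real.Gamma_add_one (by positivity)]; congr 1; ring
  rw [h3] at h
  have h4 : 2 * (1 / 2 + α / 2) = 1 + α := by ring
  have h5 : (1 : ℝ) - (1 + α) = - α := by ring
  rw [h4, h5] at h
  have h6 : (2 : ℝ) ^ (α - 1) * 2 ^ (-α) = 1 / 2 := by
    rw [← Real.rpow_add two_pos, show α - 1 + -α = -1 by ring, Real.rpow_neg_one]; norm_num
  calc _ = (2 : ℝ) ^ (α - 1) * (2 * (Real.Gamma (1 / 2 + α / 2) * (α / 2 * Real.Gamma (α / 2)))) /
        Real.sqrt Real.pi := by field_simp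
    _ = Real.Gamma (1 + α) * (2 * (2 ^ (α - 1) * 2 ^ (-α))) := by rw [h]; field_simp
    _ = _ := by rw [h6]; ring

lemma FK_zero_one (α : ℝ) (hα : α ∈ Set.Ioo (0 : ℝ) 2) :
    FK α 0 1 = Complex.I * ((Real.Gamma (1 - α / 2) * Real.Gamma (α / 2) : ℝ) : ℂ) := by
  rw [← beta_ioi α hα, ← integral_complex_ofReal, ← integral_const_mul, FK]
  refine setIntegral_congr_fun measurableSet_Ioi fun y hy => ?_
  have a0 : (1 : ℂ) - Complex.I * (y : ℂ) ≠ 0 := by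
    intro h; have := congrArg Complex.re h; simp at this
  have b0 : (1 : ℂ) + Complex.I * (y : ℂ) ≠ 0 := by
    intro h; have := congrArg Complex.re h; simp at this
  have e : (1 + (y : ℂ) ^ 2) = (1 - Complex.I * (y : ℂ)) * (1 + Complex.I * (y : ℂ)) := by
    ring_nf; rw [Complex.I_sq]; ring
  simp only [hK]
  push_cast
  rw [e]
  field_simp
  ring

lemma FK_zero_real (α : ℝ) (r : ℝ) (hr : 0 < r) :
    FK α 0 (r : ℂ) = ((r ^ (-α) : ℝ) : ℂ) * FK α 0 1 := by
  have h := integral_comp_mul_left_Ioi' (hK α 0 (r : ℂ)) 0 hr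
  rw [mul_zero] at h
  rw [FK, ← h, FK, ← integral_const_mul, ← integral_smul]
  refine setIntegral_congr_fun measurableSet_Ioi fun y hy => ?_
  have hy : 0 < y := hy
  simp only [hK, zero_add, pow_one, Complex.real_smul]
  rw [Real.mul_rpow hr.le hy.le]
  have hr' : (r : ℂ) ≠ 0 := by exact_mod_cast hr.ne'
  have e1 : (r : ℂ) - Complex.I * ((r * y : ℝ) : ℂ) = r * (1 - Complex.I * y) := by
    push_cast; ring
  have e2 : (r : ℂ) + Complex.I * ((r * y : ℝ) : ℂ) = r * (1 + Complex.I * y) := by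
    push_cast; ring
  rw [e1, e2, mul_inv, mul_inv, ← mul_sub, ← mul_assoc, ← mul_assoc, mul_inv_cancel₀ hr']
  push_cast
  ring

lemma FK_zero (α : ℝ) (hα : α ∈ Set.Ioo (0 : ℝ) 2) (z : ℂ) (hz : 0 < z.re) :
    FK α 0 z = z ^ (-(α : ℂ)) * FK α 0 1 := by
  have hU : IsOpen {z : ℂ | 0 < z.re} := isOpen_lt continuous_const Complex.continuous_re
  have h1 : AnalyticOnNhd ℂ (FK α 0) {z : ℂ | 0 < z.re} := by
    apply DifferentiableOn.analyticOnNhd _ hU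
    intro w hw
    exact (FK_hasDerivAt α hα 0 w hw).differentiableAt.differentiableWithinAt
  have h2 : AnalyticOnNhd ℂ (fun z => z ^ (-(α : ℂ)) * FK α 0 1) {z : ℂ | 0 < z.re} := by
    apply DifferentiableOn.analyticOnNhd _ hU
    intro w hw
    have : w ∈ Complex.slitPlane := Or.inl hw
    exact ((differentiableAt_id.cpow_const this).mul_const _).differentiableWithinAt
  have hconn : IsPreconnected {z : ℂ | 0 < z.re} := (convex_halfSpace_re_gt 0).isPreconnected
  refine h1.eqOn_of_preconnected_of_frequently_eq h2 hconn (z₀ := 1) (by simp) ?_ hz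
  have ht : Filter.Tendsto (fun r : ℝ => (r : ℂ)) (nhdsWithin 1 (Set.Ioi 1)) (nhdsWithin 1 {1}ᶜ) := by
    apply tendsto_nhdsWithin_of_tendsto_nhds_of_eventually_within
    · have : Filter.Tendsto (fun r : ℝ => (r : ℂ)) (nhds 1) (nhds ((1 : ℝ) : ℂ)) :=
        Complex.continuous_ofReal.tendsto 1
      rw [Complex.ofReal_one] at this
      exact this.mono_left nhdsWithin_le_nhds
    · filter_upwards [self_mem_nhdsWithin] with r hr
      have : (1 : ℝ) < r := hr
      simp only [Set.mem_compl_iff, Set.mem_singleton_iff]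
      exact_mod_cast this.ne'
  refine ht.frequently (Filter.Eventually.frequently ?_)
  filter_upwards [self_mem_nhdsWithin] with r hr
  have hr0 : (0 : ℝ) < r := lt_trans one_pos hr
  rw [FK_zero_real α r hr0, Complex.ofReal_cpow hr0.le]
  push_cast
  rfl

lemma FK_eq (α : ℝ) (hα : α ∈ Set.Ioo (0 : ℝ) 2) (m : ℕ) : ∀ z : ℂ, 0 < z.re →
    FK α m z = (∏ i ∈ Finset.range m, ((α : ℂ) + i)) / (m.factorial : ℂ) *
      z ^ (-(α : ℂ) - m) * FK α 0 1 := by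
  induction m with
  | zero => intro z hz; simp [FK_zero α hα z hz]
  | succ m ih =>
    intro z hz
    have hd := FK_hasDerivAt α hα m z hz
    have hz0 : z ∈ Complex.slitPlane := Or.inl hz
    have hd2 := (((hasDerivAt_id z).cpow_const (c := -(α : ℂ) - m) hz0).const_mul
      ((∏ i ∈ Finset.range m, ((α : ℂ) + i)) / (m.factorial : ℂ))).mul_const (FK α 0 1)
    have hU : IsOpen {z : ℂ | 0 < z.re} := isOpen_lt continuous_const Complex.continuous_re
    have hev : FK α m =ᶠ[nhds z] fun z => (∏ i ∈ Finset.range m, ((α : ℂ) + i)) / (m.factorial : ℂ) *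
      z ^ (-(α : ℂ) - m) * FK α 0 1 := by
      filter_upwards [hU.mem_nhds hz] with w hw
      exact ih w hw
    have := hd.unique (hd2.congr_of_eventuallyEq hev)
    have hm : ((m : ℂ) + 1) ≠ 0 := Nat.cast_add_one_ne_zero m
    have hf : ((m.factorial : ℕ) : ℂ) ≠ 0 := by exact_mod_cast m.factorial_ne_zero
    have hexp : -(α : ℂ) - m - 1 = -(α : ℂ) - (m + 1 : ℕ) := by push_cast; ring
    rw [hexp] at this
    simp only [id, mul_one] at this
    apply mul_left_cancel₀ (neg_ne_zero.mpr hm)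
    rw [this, Finset.prod_range_succ, Nat.factorial_succ]
    push_cast
    field_simp
    ring


lemma christov_eq (n : ℕ) (x : ℝ) : christov (n : ℤ) x =
    ∑ k ∈ Finset.range (n + 1), (n.choose k : ℂ) * (-2) ^ k *
      ((Complex.I * (x : ℂ) + 1)⁻¹) ^ (k + 1) := by
  have b0 : Complex.I * (x : ℂ) + 1 ≠ 0 := by
    intro h; have := congrArg Complex.re h; simp at this
  have e : Complex.I * (x : ℂ) - 1 = -2 + (Complex.I * (x : ℂ) + 1) := by ring
  have hz : (Complex.I * (x : ℂ) + 1) ^ ((n : ℤ) + 1) = (Complex.I * (x : ℂ) + 1) ^ (n + 1) := by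
    exact_mod_cast zpow_natCast (Complex.I * (x : ℂ) + 1) (n + 1)
  rw [christov, hz, zpow_natCast, e, add_pow, Finset.sum_div]
  refine Finset.sum_congr rfl fun k hk => ?_
  have hk : k ≤ n := by have := Finset.mem_range.mp hk; omega
  have hp : (Complex.I * (x : ℂ) + 1) ^ (n + 1) =
      (Complex.I * (x : ℂ) + 1) ^ (n - k) * (Complex.I * (x : ℂ) + 1) ^ (k + 1) := by
    rw [← pow_add]; congr 1; omega
  rw [hp, inv_pow]
  field_simp

lemma christov'_eq (n : ℕ) (x : ℝ) : christov' (n : ℤ) x =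
    ∑ k ∈ Finset.range (n + 1), (n.choose k : ℂ) * (-2) ^ k * (-(k + 1) * Complex.I) *
      ((Complex.I * (x : ℂ) + 1)⁻¹) ^ (k + 1 + 1) := by
  have b0 : Complex.I * (x : ℂ) + 1 ≠ 0 := by
    intro h; have := congrArg Complex.re h; simp at this
  rw [christov', funext (christov_eq n)]
  apply HasDerivAt.deriv
  apply HasDerivAt.fun_sum
  intro k _
  have h0 : HasDerivAt (fun x : ℝ => Complex.I * (x : ℂ) + 1) (Complex.I * 1) x :=
    ((Complex.ofRealCLM.hasDerivAt (x := x)).const_mul Complex.I).add_const 1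
  have h1 := ((h0.inv b0).pow (k + 1)).const_mul ((n.choose k : ℂ) * (-2) ^ k)
  refine h1.congr_deriv ?_
  simp only [Nat.add_sub_cancel, Pi.inv_apply]
  rw [div_eq_mul_inv, ← inv_pow]
  push_cast
  ring

lemma gbinom_nat (n k : ℕ) : gbinom (n : ℂ) k = (n.choose k : ℂ) := by
  have hf : ((k.factorial : ℕ) : ℂ) ≠ 0 := by exact_mod_cast k.factorial_ne_zero
  rw [gbinom, div_eq_iff hf, mul_comm]
  have h : (n.descFactorial k : ℂ) = ∏ i ∈ Finset.range k, ((n : ℂ) - (i : ℂ)) := by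
    induction k with
    | zero => simp
    | succ k ih =>
      rw [Finset.prod_range_succ, ← ih (by exact_mod_cast k.factorial_ne_zero),
        Nat.descFactorial_succ]
      rcases le_or_gt k n with h | h
      · push_cast [Nat.cast_sub h]; ring
      · rw [Nat.descFactorial_of_lt h]; simp
  rw [← h, Nat.descFactorial_eq_factorial_mul_choose]
  push_cast
  rfl

lemma gbinom_neg (α : ℂ) (k : ℕ) : gbinom (-1 - α) k * α * (k.factorial : ℂ) =
    (-1) ^ k * ∏ i ∈ Finset.range (k + 1), (α + (i : ℂ)) := by
  have hf : ((k.factorial : ℕ) : ℂ) ≠ 0 := by exact_mod_cast k.factorial_ne_zero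
  rw [gbinom, Finset.prod_range_succ', ← Finset.card_range k, ← Finset.prod_const,
    Finset.card_range, ← mul_assoc, ← Finset.prod_mul_distrib]
  have : ∀ i : ℕ, (-1 : ℂ) * (α + ((i + 1 : ℕ) : ℂ)) = -1 - α - i := by
    intro i; push_cast; ring
  simp only [this]
  rw [Nat.cast_zero, add_zero]
  field_simp

theorem fracLap_christov_nonneg (α : ℝ) (hα : α ∈ Set.Ioo (0 : ℝ) 2) (n : ℕ) (x : ℝ) :
    IntegrableOn (fun y : ℝ =>
        (christov' (n : ℤ) (x - y) - christov' (n : ℤ) (x + y)) * ((y ^ (-α) : ℝ) : ℂ))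
      (Set.Ioi 0) ∧
    ((cFrac α / α : ℝ) : ℂ) *
        ∫ y in Set.Ioi (0 : ℝ),
          (christov' (n : ℤ) (x - y) - christov' (n : ℤ) (x + y)) * ((y ^ (-α) : ℝ) : ℂ) =
      ((Real.Gamma (1 + α) : ℂ) / (Complex.I * (x : ℂ) + 1) ^ ((1 : ℂ) + (α : ℂ))) *
        ∑ k ∈ Finset.range (n + 1),
          gbinom (n : ℂ) k * gbinom (-1 - (α : ℂ)) k *
            (2 / (Complex.I * (x : ℂ) + 1)) ^ k := by
  set z : ℂ := Complex.I * (x : ℂ) + 1 with hz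
  have hzre : 0 < z.re := by simp [hz]
  have hz0 : z ≠ 0 := by intro h; rw [h] at hzre; simp at hzre
  have hfun : (fun y : ℝ =>
      (christov' (n : ℤ) (x - y) - christov' (n : ℤ) (x + y)) * ((y ^ (-α) : ℝ) : ℂ)) =
      fun y => ∑ k ∈ Finset.range (n + 1),
        ((n.choose k : ℂ) * (-2) ^ k * (-(k + 1) * Complex.I)) * hK α (k + 1) z y := by
    funext y
    rw [christov'_eq, christov'_eq, ← Finset.sum_sub_distrib, Finset.sum_mul]
    refine Finset.sum_congr rfl fun k _ => ?_
    have e1 : Complex.I * ((x - y : ℝ) : ℂ) + 1 = z - Complex.I * y := by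
      rw [hz]; push_cast; ring
    have e2 : Complex.I * ((x + y : ℝ) : ℂ) + 1 = z + Complex.I * y := by
      rw [hz]; push_cast; ring
    rw [e1, e2, hK]
    ring
  rw [hfun]
  have hint : ∀ k ∈ Finset.range (n + 1), Integrable (fun y : ℝ =>
      ((n.choose k : ℂ) * (-2) ^ k * (-(k + 1) * Complex.I)) * hK α (k + 1) z y)
      (volume.restrict (Set.Ioi 0)) :=
    fun k _ => (hK_integrable α hα (k + 1) z hzre).const_mul _
  refine ⟨integrable_finsetSum _ hint, ?_⟩
  rw [integral_finsetSum _ hint, Finset.mul_sum, Finset.mul_sum]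
  refine Finset.sum_congr rfl fun k _ => ?_
  rw [integral_const_mul]
  change _ * (_ * FK α (k + 1) z) = _
  rw [FK_eq α hα (k + 1) z hzre, FK_zero_one α hα, gbinom_nat, ← const_eq α hα]
  have hα0 : (α : ℂ) ≠ 0 := by exact_mod_cast hα.1.ne'
  have hf : ((k.factorial : ℕ) : ℂ) ≠ 0 := by exact_mod_cast k.factorial_ne_zero
  have hk1 : (k : ℂ) + 1 ≠ 0 := Nat.cast_add_one_ne_zero k
  have hg : gbinom (-1 - (α : ℂ)) k =
      (-1) ^ k * (∏ i ∈ Finset.range (k + 1), ((α : ℂ) + (i : ℂ))) / (α * (k.factorial : ℂ)) := by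
    rw [eq_div_iff (mul_ne_zero hα0 hf), ← gbinom_neg]; ring
  have hpow : z ^ (-(α : ℂ) - ((k + 1 : ℕ) : ℂ)) = (z ^ ((1 : ℂ) + (α : ℂ)))⁻¹ * (z ^ k)⁻¹ := by
    rw [← mul_inv, ← Complex.cpow_natCast z k, ← Complex.cpow_add _ _ hz0, ← Complex.cpow_neg]
    congr 1; push_cast; ring
  rw [hg, hpow, div_pow, show cFrac α = α * 2 ^ (α - 1) * Real.Gamma (1 / 2 + α / 2) /
    (Real.sqrt Real.pi * Real.Gamma (1 - α / 2)) from rfl, Nat.factorial_succ]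
  generalize α * 2 ^ (α - 1) * Real.Gamma (1 / 2 + α / 2) /
    (Real.sqrt Real.pi * Real.Gamma (1 - α / 2)) / α = D
  generalize Real.Gamma (1 - α / 2) * Real.Gamma (α / 2) = G
  generalize (∏ i ∈ Finset.range (k + 1), ((α : ℂ) + (i : ℂ))) = P
  have hW : z ^ ((1 : ℂ) + (α : ℂ)) ≠ 0 := by
    rw [Complex.cpow_def_of_ne_zero hz0]; exact Complex.exp_ne_zero _
  generalize z ^ ((1 : ℂ) + (α : ℂ)) = W at *
  have h2 : (-2 : ℂ) ^ k = (-1) ^ k * 2 ^ k := by rw [← mul_pow]; norm_num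
  rw [h2]
  push_cast
  field_simp
  rw [Complex.I_sq]
  ring
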